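/- Let G be a connected graph of diameter at most d, and let F be a set of at most k edges of G such that G − F is connected. Then the diameter of G − F is at most (k+1)·d. -/

import Mathlib

/-!
Let `f` be the distance from `u` in `G - F`, and suppose that `L = f v` exceeds `(k + 1) * d`, where
`k` is the number of edges in `F`. Identify in `ℝ` the two values of `f` at the ends of each edge of
`F`. The `k + 2` points `0, s, 2 * s, …, L` with `s = L / (k + 1) > d` are `s`-separated, and after
each identification it is enough to discard one of them, so at the end two points `p < q` are still
at quotient distance at least `s`. Round `p` and `q` to integers `m` and `n` with `n - m > d`
and total error at most `1`, and take vertices at the levels `m` and `n`. A walk of `G` between them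
that avoids `F` has at least `n - m > d` edges; a walk through `F` spends an edge without moving in
the quotient, so it has at least `1 + (s - 1) > d` edges.
-/

theorem exists_forall_eq_left_or_exists_forall_eq_right {α β : Type*} [Nonempty α]
    {r : α → β → Prop} (h : ∀ a b a' b', r a b → r a' b' → a = a' ∨ b = b') :
    (∃ c, ∀ a b, r a b → a = c) ∨ ∃ c, ∀ a b, r a b → b = c := by
  by_contra! hne
  obtain ⟨hleft, hright⟩ := hne
  obtain ⟨a₀, b₀, h₀, -⟩ := hleft (Classical.arbitrary α)
  obtain ⟨a₁, b₁, h₁, ha₁⟩ := hleft a₀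
  obtain ⟨a₂, b₂, h₂, hb₂⟩ := hright b₀
  grind

section IdentifyPoints

variable {X R : Type*} [AddCommGroup R] [LinearOrder R] [IsOrderedAddMonoid R]

/-- The quotient pseudometric obtained from `δ` by identifying `a` with `b`, pulled back to `X`: the
two extra terms are the lengths of the detours that jump from `a` to `b` or from `b` to `a`. A
geodesic needs at most one jump. -/
def identifyPoints (δ : PseudoMetric X R) (a b : X) : PseudoMetric X R where
  toFun x y := min (δ x y) (min (δ x a + δ b y) (δ x b + δ a y))
  refl' x := by
    have detour_nonneg (c e : X) : 0 ≤ δ x c + δ e x := add_nonneg (δ.nonneg _ _) (δ.nonneg _ _)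
    simp [detour_nonneg]
  symm' x y := by
    rw [δ.symm x y, δ.symm x a, δ.symm b y, δ.symm x b, δ.symm a y, add_comm (δ a x),
      add_comm (δ b x), min_comm (δ y b + δ a x)]
  triangle' x y z := by
    have := δ.nonneg b y
    have := δ.nonneg a y
    have := δ.nonneg y a
    have := δ.nonneg y b
    grind [δ.triangle x y z, δ.triangle x y a, δ.triangle x y b, δ.triangle a y z,
      δ.triangle b y z, δ.triangle x a z, δ.triangle x b z]

variable {δ : PseudoMetric X R}

theorem identifyPoints_apply (a b x y : X) :
    identifyPoints δ a b x y = min (δ x y) (min (δ x a + δ b y) (δ x b + δ a y)) :=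
  rfl

theorem identifyPoints_le (a b : X) : identifyPoints δ a b ≤ δ :=
  fun _ _ ↦ min_le_left _ _

theorem identifyPoints_left_right (a b : X) : identifyPoints δ a b a b = 0 := by
  refine le_antisymm ?_ (PseudoMetric.nonneg _ _ _)
  simp [identifyPoints_apply]

theorem exists_pairwise_le_identifyPoints {s : R} {T : Set X}
    (hT : T.Pairwise fun p q ↦ s ≤ δ p q) (a b : X) :
    ∃ c, (T \ {c}).Pairwise fun p q ↦ s ≤ identifyPoints δ a b p q := by
  let short (p q : X) : Prop := p ∈ T ∧ q ∈ T ∧ δ p a + δ b q < s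
  -- Disjoint short detours `p a b q` and `p' a b q'` would make `δ p p' + δ q q'` less than `2 s`.
  have short_meet (p q p' q' : X) (h : short p q) (h' : short p' q') : p = p' ∨ q = q' := by
    by_contra! hne
    have hp := hT h.1 h'.1 hne.1
    have hq := hT h.2.1 h'.2.1 hne.2
    have := δ.triangle p a p'
    have := δ.triangle q b q'
    grind [δ.symm a p', δ.symm q b]
  obtain ⟨c, hc⟩ : ∃ c, ∀ p q, short p q → p = c ∨ q = c := by
    have : Nonempty X := ⟨a⟩
    rcases exists_forall_eq_left_or_exists_forall_eq_right short_meet with ⟨c, hc⟩ | ⟨c, hc⟩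
    exacts [⟨c, fun p q h ↦ .inl (hc p q h)⟩, ⟨c, fun p q h ↦ .inr (hc p q h)⟩]
  have le_detour {p q : X} (hp : p ∈ T \ {c}) (hq : q ∈ T \ {c}) : s ≤ δ p a + δ b q :=
    le_of_not_gt fun hlt ↦ (hc p q ⟨hp.1, hq.1, hlt⟩).elim hp.2 hq.2
  refine ⟨c, fun p hp q hq hne ↦ le_min (hT hp.1 hq.1 hne) (le_min (le_detour hp hq) ?_)⟩
  rw [δ.symm p b, δ.symm a q, add_comm]
  exact le_detour hq hp

theorem exists_le_eq_zero_pairwise_le {s : R} {T : Finset X}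
    (hT : (T : Set X).Pairwise fun p q ↦ s ≤ δ p q) (E : Finset (Sym2 X)) :
    ∃ δ' ≤ δ, (∀ x y, s(x, y) ∈ E → δ' x y = 0) ∧
      ∃ T' ⊆ T, T.card ≤ T'.card + E.card ∧ (T' : Set X).Pairwise fun p q ↦ s ≤ δ' p q := by
  classical
  induction E using Finset.induction_on with
  | empty => exact ⟨δ, le_rfl, by simp, T, subset_rfl, by simp, hT⟩
  | insert e E he ih =>
    obtain ⟨δ', hle, hzero, T', hsub, hcard, hsep⟩ := ih
    induction e with | _ a b
    obtain ⟨c, hc⟩ := exists_pairwise_le_identifyPoints hsep a b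
    refine ⟨identifyPoints δ' a b, (identifyPoints_le a b).trans hle, fun x y hxy ↦ ?_,
      T'.erase c, (T'.erase_subset c).trans hsub, ?_, by rwa [Finset.coe_erase]⟩
    · rcases Finset.mem_insert.1 hxy with hxy | hxy
      · rcases Sym2.eq_iff.1 hxy with ⟨rfl, rfl⟩ | ⟨rfl, rfl⟩
        · exact identifyPoints_left_right x y
        · rw [PseudoMetric.symm]
          exact identifyPoints_left_right y x
      · exact le_antisymm ((identifyPoints_le a b x y).trans (hzero x y hxy).le)
          (PseudoMetric.nonneg _ _ _)
    · have := Finset.pred_card_le_card_erase (s := T') (a := c)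
      rw [Finset.card_insert_of_notMem he]
      omega

end IdentifyPoints

section Real

/-- The distance function of a pseudometric space, bundled; on `ℝ` it is the metric before any
identification. -/
def distPseudoMetric (X : Type*) [PseudoMetricSpace X] : PseudoMetric X ℝ :=
  ⟨dist, dist_self, dist_comm, dist_triangle⟩

theorem exists_finset_Icc_pairwise_le_dist (N : ℕ) {s : ℝ} (hs : 0 < s) :
    ∃ T : Finset ℝ, T.card = N + 1 ∧ (T : Set ℝ) ⊆ Set.Icc 0 (N * s) ∧
      (T : Set ℝ).Pairwise fun p q ↦ s ≤ dist p q := by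
  have dist_mul (i j : ℕ) : dist (i * s) (j * s) = dist i j * s := by
    rw [Real.dist_eq, ← sub_mul, abs_mul, abs_of_pos hs, ← Real.dist_eq, Nat.dist_cast_real]
  have hinj : Function.Injective fun i : ℕ ↦ i * s := fun i j hij ↦
    Nat.cast_injective (mul_right_cancel₀ hs.ne' hij)
  refine ⟨(Finset.range (N + 1)).map ⟨_, hinj⟩, by simp, ?_, ?_⟩
  · intro p hp
    obtain ⟨i, hi, rfl⟩ := Finset.mem_map.1 hp
    have hiN : i ≤ N := Finset.mem_range_succ_iff.1 hi
    refine ⟨mul_nonneg i.cast_nonneg hs.le, ?_⟩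
    dsimp only [Function.Embedding.coeFn_mk]
    gcongr
  · intro p hp q hq hne
    obtain ⟨i, -, rfl⟩ := Finset.mem_map.1 hp
    obtain ⟨j, -, rfl⟩ := Finset.mem_map.1 hq
    have hij : i ≠ j := fun h ↦ hne (by rw [h])
    calc s ≤ dist i j * s := le_mul_of_one_le_left hs.le (Nat.pairwise_one_le_dist hij)
      _ = dist (i * s) (j * s) := (dist_mul i j).symm

theorem exists_nat_add_lt_abs_sub_add_abs_sub_le_one {K : Type*} [Field K] [LinearOrder K]
    [IsStrictOrderedRing K] [FloorSemiring K] {p q : K} {d : ℕ} (hp : 0 ≤ p) (h : p + d < q) :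
    ∃ m n : ℕ, n ≤ ⌈q⌉₊ ∧ m + d < n ∧ |p - m| + |q - n| ≤ 1 := by
  have : (0 : K) ≤ d := d.cast_nonneg
  have hfloor_p := Nat.floor_le hp
  have hfloor_q : (⌊q⌋₊ : K) ≤ q := Nat.floor_le (by linarith)
  have hlt_p := Nat.lt_floor_add_one p
  have hlt_q := Nat.lt_floor_add_one q
  have add_lt_of_cast {m n : ℕ} (hmn : (m : K) + d < n) : m + d < n := by exact_mod_cast hmn
  have succ_floor_le (hq : (⌊q⌋₊ : K) < q) : ⌊q⌋₊ + 1 ≤ ⌈q⌉₊ := Nat.lt_ceil.2 hq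
  rcases lt_or_ge (p - ⌊p⌋₊) (q - ⌊q⌋₊) with hfract | hfract
  · refine ⟨⌊p⌋₊, ⌊q⌋₊ + 1, succ_floor_le (by linarith), add_lt_of_cast ?_, ?_⟩ <;> push_cast
    · linarith
    · rw [abs_of_nonneg (by linarith), abs_of_nonpos (by linarith)]
      linarith
  rcases le_or_gt (p - ⌊p⌋₊ + (q - ⌊q⌋₊)) 1 with hsum | hsum
  · refine ⟨⌊p⌋₊, ⌊q⌋₊, Nat.floor_le_ceil q, add_lt_of_cast (by linarith), ?_⟩
    rwa [abs_of_nonneg (by linarith), abs_of_nonneg (by linarith)]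
  · refine ⟨⌊p⌋₊ + 1, ⌊q⌋₊ + 1, succ_floor_le (by linarith), add_lt_of_cast ?_, ?_⟩ <;> push_cast
    · linarith
    · rw [abs_of_nonpos (by linarith), abs_of_nonpos (by linarith)]
      linarith

theorem exists_pseudoMetric_eq_zero_exists_nat_lt (E : Finset (Sym2 ℝ)) {d L : ℕ}
    (h : (E.card + 1) * d < L) :
    ∃ δ ≤ distPseudoMetric ℝ, (∀ x y, s(x, y) ∈ E → δ x y = 0) ∧
      ∃ m n : ℕ, n ≤ L ∧ m + d < n ∧ d < δ m n + 1 := by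
  let N := E.card + 1
  have hN : (0 : ℝ) < N := by positivity
  let s : ℝ := L / N
  have hds : d < s := by
    rw [lt_div_iff₀' hN]
    exact_mod_cast h
  obtain ⟨T, hcard, hIcc, hT⟩ := exists_finset_Icc_pairwise_le_dist N (d.cast_nonneg.trans_lt hds)
  rw [mul_div_cancel₀ (L : ℝ) hN.ne'] at hIcc
  obtain ⟨δ, hle, hzero, T', hsub, hcard', hsep⟩ :=
    exists_le_eq_zero_pairwise_le (δ := distPseudoMetric ℝ) hT E
  have hT' : (T' : Set ℝ).Nontrivial := Finset.one_lt_card_iff_nontrivial.1 (by omega)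
  obtain ⟨p, hp, q, hq, hpq⟩ := hT'.exists_lt
  have hs : s ≤ δ p q := hsep hp hq hpq.ne
  have hδ_le (x y : ℝ) : δ x y ≤ |x - y| := (hle x y).trans_eq (Real.dist_eq x y)
  have hgap : p + d < q := by
    have := hδ_le p q
    rw [abs_of_neg (sub_neg.2 hpq)] at this
    linarith
  obtain ⟨m, n, hn, hmn, hround⟩ :=
    exists_nat_add_lt_abs_sub_add_abs_sub_le_one (hIcc (hsub hp)).1 hgap
  refine ⟨δ, hle, hzero, m, n, hn.trans (Nat.ceil_le.2 (hIcc (hsub hq)).2), hmn, ?_⟩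
  calc (d : ℝ) < s := hds
    _ ≤ δ p q := hs
    _ ≤ δ p m + (δ m n + δ n q) := (δ.triangle p m q).trans (by grw [δ.triangle m n q])
    _ ≤ |p - m| + (δ m n + |q - n|) := by grw [hδ_le p m, δ.symm n q, hδ_le q n]
    _ ≤ δ m n + 1 := by linarith

end Real

section Graph

variable {V : Type*} {G : SimpleGraph V}

theorem exists_reachable_dist_eq {u v : V} (huv : G.Reachable u v) {i : ℕ}
    (hi : i ≤ G.dist u v) : ∃ x, G.Reachable u x ∧ G.dist u x = i := by
  obtain ⟨w, hw⟩ := huv.exists_walk_length_eq_dist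
  refine ⟨w.getVert i, (w.take i).reachable, ?_⟩
  rw [← SimpleGraph.length_eq_dist_of_subwalk hw (w.isSubwalk_take i),
    SimpleGraph.Walk.take_length, hw, min_eq_left hi]

theorem abs_dist_sub_dist_le_one {x y : V} (u : V) (hxy : G.Adj x y) :
    |(G.dist u x : ℝ) - G.dist u y| ≤ 1 := by
  have hdiff := hxy.diff_dist_adj (u := u)
  have hle : G.dist u x ≤ 1 + G.dist u y := by omega
  have hge : G.dist u y ≤ 1 + G.dist u x := by omega
  rw [abs_sub_le_iff, sub_le_iff_le_add, sub_le_iff_le_add]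
  exact_mod_cast And.intro hle hge

theorem le_walk_length_or_add_one_le_walk_length {X : Type*} {δ₀ δ : PseudoMetric X ℝ}
    (hle : δ ≤ δ₀) {F : Set (Sym2 V)} {f : V → X}
    (hlip : ∀ x y, (G.deleteEdges F).Adj x y → δ₀ (f x) (f y) ≤ 1)
    (hF : ∀ x y, s(x, y) ∈ F → δ (f x) (f y) = 0) {x y : V} (w : G.Walk x y) :
    δ₀ (f x) (f y) ≤ w.length ∨ δ (f x) (f y) + 1 ≤ w.length := by
  induction w with
  | nil => simp
  | @cons x z y hxz w ih =>
    have htri := δ.triangle (f x) (f z) (f y)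
    have htri₀ := δ₀.triangle (f x) (f z) (f y)
    have hxz_le := hle (f x) (f z)
    have hzy_le := hle (f z) (f y)
    rw [SimpleGraph.Walk.length_cons, Nat.cast_succ]
    by_cases hmem : s(x, z) ∈ F
    · have := hF x z hmem
      right
      rcases ih with ih | ih <;> linarith
    · have := hlip x z (SimpleGraph.deleteEdges_adj.2 ⟨hxz, hmem⟩)
      rcases ih with ih | ih
      · left; linarith
      · right; linarith

end Graph

theorem diam_deleteEdges_le_general {V : Type*} (G : SimpleGraph V) (d : ℕ)
    (hdiam : ∀ u v : V, G.Reachable u v → G.dist u v ≤ d) (F : Finset (Sym2 V)) (u v : V)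
    (huv : (G.deleteEdges ↑F).Reachable u v) :
    (G.deleteEdges ↑F).dist u v ≤ (F.card + 1) * d := by
  classical
  by_contra! hlt
  let f (x : V) : ℝ := (G.deleteEdges ↑F).dist u x
  have hcard : ((F.image (Sym2.map f)).card + 1) * d < (G.deleteEdges ↑F).dist u v :=
    lt_of_le_of_lt (by grw [Finset.card_image_le]) hlt
  obtain ⟨δ, hle, hzero, m, n, hn, hmn, hδ⟩ := exists_pseudoMetric_eq_zero_exists_nat_lt _ hcard
  obtain ⟨x, hux, hx⟩ := exists_reachable_dist_eq huv (i := m) (by omega)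
  obtain ⟨y, huy, hy⟩ := exists_reachable_dist_eq huv hn
  have hxy : G.Reachable x y := (hux.symm.trans huy).mono (G.deleteEdges_le _)
  obtain ⟨w, hw⟩ := hxy.exists_walk_length_eq_dist
  have hwd : (w.length : ℝ) ≤ d := by exact_mod_cast hw.trans_le (hdiam x y hxy)
  have hzero_f (a b : V) (hab : s(a, b) ∈ F) : δ (f a) (f b) = 0 :=
    hzero _ _ (Finset.mem_image_of_mem (Sym2.map f) hab)
  rcases le_walk_length_or_add_one_le_walk_length hle (F := F) (f := f)
    (fun a b hab ↦ abs_dist_sub_dist_le_one u hab) hzero_f w with havoid | hthrough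
  · have hmn' : (m : ℝ) + d < n := by exact_mod_cast hmn
    have hxy_le : |f x - f y| ≤ w.length := (Real.dist_eq _ _).symm.trans_le havoid
    simp only [f, hx, hy] at hxy_le
    linarith [neg_le_of_abs_le hxy_le]
  · simp only [f, hx, hy] at hthrough
    linarith

theorem diam_deleteEdges_le {V : Type*} (G : SimpleGraph V) (k d : ℕ)
    (hk : 0 < k) (hd : 0 < d) (hconn : G.Connected)
    (hdiam : ∀ u v : V, G.dist u v ≤ d)
    (F : Finset (Sym2 V)) (hF : ↑F ⊆ G.edgeSet) (hcard : F.card ≤ k)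
    (hconn' : (G.deleteEdges ↑F).Connected) :
    ∀ u v : V, (G.deleteEdges ↑F).dist u v ≤ (k + 1) * d := fun u v ↦
  (diam_deleteEdges_le_general G d (fun x y _ ↦ hdiam x y) F u v (hconn' u v)).trans (by gcongr)
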